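/- arXiv:2206.14736 — 2 statements merged into one kernel-verified Lean document; each statement's English description precedes it below -/
import Mathlib

section
/- In the setting of the shell-summation lemmas, let Φ > 0 be a real number such that N_{1:p} ≤ Φ·Ñ_p for every p ∈ {1,…,p̃}. Then Ñ_1 ≤ (1 + 1/(Φ·ᾱ + χ))^{−(p̃−1)} · ᾱ · N_{1:p̃}. -/
/-!
Write `c = Φ ᾱ + χ` and `S_p = Ñ_1 + ⋯ + Ñ_p`. In `S_p`, the mass of a shell `j ≤ p` enters with
total weight at most `ᾱ`, and that of a shell `j > p` with a tail of `α` starting beyond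
`|p + 1 - j|`, hence at most `χ` times its weight in `Ñ_{p+1}`. So
`S_p ≤ ᾱ N_{1:p} + χ Ñ_{p+1} ≤ c Ñ_{p+1}`, that is, `(1 + 1/c) S_p ≤ S_{p+1}`. This geometric
growth from `S_1 = Ñ_1` is limited by `S_p ≤ ᾱ N_{1:p̃}`.
-/

section Summation

open Finset

theorem sum_comp_le_tsum_of_injOn {ι κ M : Type*} [AddCommMonoid M] [PartialOrder M]
    [IsOrderedAddMonoid M] [TopologicalSpace M] [OrderClosedTopology M] {g : κ → M} {f : ι → κ}
    {s : Finset ι} (hg : Summable g) (hg0 : ∀ k, 0 ≤ g k) (hf : Set.InjOn f s) :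
    ∑ i ∈ s, g (f i) ≤ ∑' k, g k := by
  classical
  rw [← sum_image (f := g) hf]
  exact hg.sum_le_tsum _ fun k _ => hg0 k

theorem hasSum_natAbs {α : ℕ → ℝ} (hsum : Summable α) :
    HasSum (fun k : ℤ => α k.natAbs) (α 0 + 2 * ∑' j, α (j + 1)) := by
  have htail : HasSum (fun j => α (j + 1)) (∑' j, α (j + 1)) :=
    ((summable_nat_add_iff 1).2 hsum).hasSum
  have hneg (j : ℕ) : (-((j : ℤ) + 1)).natAbs = j + 1 := by omega
  convert HasSum.of_nat_of_neg_add_one (f := fun k : ℤ => α k.natAbs)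
    (by simpa using hsum.hasSum) (by simpa only [hneg] using htail) using 1
  rw [hsum.tsum_eq_zero_add]
  ring

theorem one_add_one_div_pow_mul_le_sum_Icc {f : ℕ → ℝ} {c : ℝ} (hc : 0 < c) {a n : ℕ}
    (h : ∀ k < n, ∑ i ∈ Icc a (a + k), f i ≤ c * f (a + k + 1)) :
    (1 + 1 / c) ^ n * f a ≤ ∑ i ∈ Icc a (a + n), f i := by
  have hstep (k : ℕ) (hk : k < n) :
      (1 + 1 / c) * ∑ i ∈ Icc a (a + k), f i ≤ ∑ i ∈ Icc a (a + (k + 1)), f i := by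
    rw [← add_assoc, sum_Icc_succ_top (by omega), one_add_mul, one_div_mul_eq_div]
    gcongr
    exact (div_le_iff₀' hc).2 (h k hk)
  simpa using geom_le (u := fun k => ∑ i ∈ Icc a (a + k), f i) (by positivity) n hstep

end Summation

section Shells

open Finset

/-- The quantity `Ñ_p` of the paper: the masses `N j` of the shells `j ∈ t`, weighted by `α` at
their distance from `p`. -/
def smoothedMass (α N : ℕ → ℝ) (t : Finset ℕ) (p : ℕ) : ℝ :=
  ∑ j ∈ t, α (Nat.dist p j) * N j

variable {α N : ℕ → ℝ} {s t : Finset ℕ}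

theorem sum_dist_le_tsum_natAbs (hα : ∀ j, 0 ≤ α j) (hsum : Summable α) (s : Finset ℕ) (j : ℕ) :
    ∑ q ∈ s, α (Nat.dist q j) ≤ ∑' k : ℤ, α k.natAbs := by
  have hdist (q : ℕ) : Nat.dist q j = ((q : ℤ) - j).natAbs := by
    unfold Nat.dist
    omega
  simp only [hdist]
  exact sum_comp_le_tsum_of_injOn (g := fun k : ℤ => α k.natAbs) (f := fun q : ℕ => (q : ℤ) - j)
    (hasSum_natAbs hsum).summable (fun _ => hα _) fun _ _ _ _ h => by simpa using h

theorem sum_dist_le_tsum_tail (hα : ∀ j, 0 ≤ α j) (hsum : Summable α) {r j : ℕ}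
    (hs : ∀ q ∈ s, q < r) (hrj : r ≤ j) :
    ∑ q ∈ s, α (Nat.dist q j) ≤ ∑' i, α (i + 1 + Nat.dist r j) := by
  have hdist (q : ℕ) (hq : q ∈ s) : Nat.dist q j = r - 1 - q + 1 + Nat.dist r j := by
    have := hs q hq
    unfold Nat.dist
    omega
  rw [sum_congr rfl fun q hq => congrArg α (hdist q hq)]
  refine sum_comp_le_tsum_of_injOn (g := fun i => α (i + 1 + Nat.dist r j))
    (f := fun q => r - 1 - q) ?_ (fun _ => hα _) fun q hq q' hq' h => ?_
  · simpa only [add_assoc] using (summable_nat_add_iff (1 + Nat.dist r j)).2 hsum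
  · have := hs q hq
    have := hs q' hq'
    dsimp only at h
    omega

theorem sum_smoothedMass (s t : Finset ℕ) :
    ∑ q ∈ s, smoothedMass α N t q = ∑ j ∈ t, (∑ q ∈ s, α (Nat.dist q j)) * N j := by
  simp only [smoothedMass, sum_mul]
  exact sum_comm

theorem smoothedMass_filter_add_filter_not (P : ℕ → Prop) [DecidablePred P] (p : ℕ) :
    smoothedMass α N {j ∈ t | P j} p + smoothedMass α N {j ∈ t | ¬P j} p = smoothedMass α N t p :=
  sum_filter_add_sum_filter_not t P _

theorem smoothedMass_mono (hα : ∀ j, 0 ≤ α j) (hN : ∀ j ∈ t, 0 ≤ N j) (hst : s ⊆ t) (p : ℕ) :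
    smoothedMass α N s p ≤ smoothedMass α N t p :=
  sum_le_sum_of_subset_of_nonneg hst fun j hj _ => mul_nonneg (hα _) (hN j hj)

theorem sum_smoothedMass_le_tsum_mul_sum (hα : ∀ j, 0 ≤ α j) (hsum : Summable α)
    (hN : ∀ j ∈ t, 0 ≤ N j) (s : Finset ℕ) :
    ∑ q ∈ s, smoothedMass α N t q ≤ (∑' k : ℤ, α k.natAbs) * ∑ j ∈ t, N j := by
  rw [sum_smoothedMass, mul_sum]
  gcongr with j hj
  · exact hN j hj
  · exact sum_dist_le_tsum_natAbs hα hsum s j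

theorem sum_smoothedMass_le_mul_smoothedMass (hα : ∀ j, 0 ≤ α j) (hsum : Summable α)
    (hN : ∀ j ∈ t, 0 ≤ N j) {χ : ℝ} (hχα : ∀ j, ∑' i, α (i + 1 + j) ≤ χ * α j) {r : ℕ}
    (hs : ∀ q ∈ s, q < r) (ht : ∀ j ∈ t, r ≤ j) :
    ∑ q ∈ s, smoothedMass α N t q ≤ χ * smoothedMass α N t r := by
  rw [sum_smoothedMass, smoothedMass, mul_sum]
  simp only [← mul_assoc]
  gcongr with j hj
  · exact hN j hj
  · exact (sum_dist_le_tsum_tail hα hsum hs (ht j hj)).trans (hχα _)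

theorem sum_smoothedMass_le_add (hα : ∀ j, 0 ≤ α j) (hsum : Summable α)
    (hN : ∀ j ∈ t, 0 ≤ N j) {χ : ℝ} (hχ : 0 ≤ χ) (hχα : ∀ j, ∑' i, α (i + 1 + j) ≤ χ * α j)
    {r : ℕ} (hs : ∀ q ∈ s, q < r) :
    ∑ q ∈ s, smoothedMass α N t q ≤
      (∑' k : ℤ, α k.natAbs) * ∑ j ∈ t with j < r, N j + χ * smoothedMass α N t r := by
  simp only [← smoothedMass_filter_add_filter_not (t := t) (· < r), sum_add_distrib]
  rw [smoothedMass_filter_add_filter_not]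
  refine add_le_add
    (sum_smoothedMass_le_tsum_mul_sum hα hsum (fun j hj => hN j (mem_of_mem_filter j hj)) s) ?_
  calc ∑ q ∈ s, smoothedMass α N {j ∈ t | ¬j < r} q
      ≤ χ * smoothedMass α N {j ∈ t | ¬j < r} r :=
        sum_smoothedMass_le_mul_smoothedMass hα hsum (fun j hj => hN j (mem_of_mem_filter j hj))
          hχα hs fun j hj => not_lt.1 (mem_filter.1 hj).2
    _ ≤ χ * smoothedMass α N t r := by
        gcongr
        exact smoothedMass_mono hα hN (filter_subset _ _) r

theorem sum_smoothedMass_le_of_sum_lt_le (hα : ∀ j, 0 ≤ α j) (hsum : Summable α)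
    (hN : ∀ j ∈ t, 0 ≤ N j) {χ Φ : ℝ} (hχ : 0 ≤ χ)
    (hχα : ∀ j, ∑' i, α (i + 1 + j) ≤ χ * α j) {r : ℕ} (hs : ∀ q ∈ s, q < r)
    (hdom : ∑ j ∈ t with j < r, N j ≤ Φ * smoothedMass α N t r) :
    ∑ q ∈ s, smoothedMass α N t q ≤ (Φ * ∑' k : ℤ, α k.natAbs + χ) * smoothedMass α N t r := by
  have hA : 0 ≤ ∑' k : ℤ, α k.natAbs := tsum_nonneg fun _ => hα _
  calc ∑ q ∈ s, smoothedMass α N t q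
      ≤ (∑' k : ℤ, α k.natAbs) * ∑ j ∈ t with j < r, N j + χ * smoothedMass α N t r :=
        sum_smoothedMass_le_add hα hsum hN hχ hχα hs
    _ ≤ (∑' k : ℤ, α k.natAbs) * (Φ * smoothedMass α N t r) + χ * smoothedMass α N t r := by gcongr
    _ = (Φ * ∑' k : ℤ, α k.natAbs + χ) * smoothedMass α N t r := by ring

theorem stmt_9_general {a b : ℕ} (hab : a ≤ b) (hN : ∀ j ∈ t, 0 ≤ N j)
    (hα : ∀ j, 0 ≤ α j) (hα0 : 0 < α 0) (hsum : Summable α)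
    {abar χ : ℝ} (habar : abar = α 0 + 2 * ∑' j, α (j + 1))
    (hχα : ∀ j, ∑' q, α (q + 1 + j) ≤ χ * α j) {Φ : ℝ} (hΦ : 0 < Φ)
    (hdom : ∀ p ∈ Ioc a b, ∑ j ∈ t with j < p, N j ≤ Φ * smoothedMass α N t p) :
    smoothedMass α N t a ≤
      (1 + 1 / (Φ * abar + χ)) ^ (-((b : ℤ) - a)) * abar * ∑ j ∈ t, N j := by
  obtain ⟨n, rfl⟩ := Nat.exists_eq_add_of_le hab
  have hχ : 0 ≤ χ := nonneg_of_mul_nonneg_left ((tsum_nonneg fun _ => hα _).trans (hχα 0)) hα0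
  have habar_pos : 0 < abar :=
    habar ▸ add_pos_of_pos_of_nonneg hα0 (mul_nonneg zero_le_two (tsum_nonneg fun _ => hα _))
  rw [← (hasSum_natAbs hsum).tsum_eq] at habar
  have hgrowth : (1 + 1 / (Φ * abar + χ)) ^ n * smoothedMass α N t a ≤
      ∑ q ∈ Icc a (a + n), smoothedMass α N t q := by
    refine one_add_one_div_pow_mul_le_sum_Icc (by positivity) fun k hk => habar ▸ ?_
    exact sum_smoothedMass_le_of_sum_lt_le hα hsum hN hχ hχα
      (fun q hq => Nat.lt_succ_of_le (mem_Icc.1 hq).2) (hdom _ (mem_Ioc.2 (by omega)))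
  have htotal : ∑ q ∈ Icc a (a + n), smoothedMass α N t q ≤ abar * ∑ j ∈ t, N j :=
    habar ▸ sum_smoothedMass_le_tsum_mul_sum hα hsum hN _
  rw [Nat.cast_add, add_sub_cancel_left, zpow_neg, zpow_natCast, mul_assoc,
    le_inv_mul_iff₀ (by positivity)]
  exact hgrowth.trans htotal

end Shells

/-- Lemma 10 of the paper.
In the shell-summation setting (see Statement 7), if `Φ > 0` satisfies
`N_{1:p} ≤ Φ Ñ_p` for every `p ∈ {1,…,ptil}`, then
`Ñ_1 ≤ (1 + 1/(Φ abar + χ))^{-(ptil-1)} abar N_{1:ptil}`. -/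
theorem stmt_9 (ptil : ℕ) (hptil : 1 ≤ ptil) (N : ℕ → ℝ) (hN : ∀ j, 0 ≤ N j)
    (α : ℕ → ℝ) (hα : ∀ j, 0 < α j) (hsum : Summable α)
    (abar χ : ℝ) (habar : abar = α 0 + 2 * ∑' j : ℕ, α (j + 1))
    (hχ : 0 ≤ χ) (hχα : ∀ j : ℕ, ∑' q : ℕ, α (q + 1 + j) ≤ χ * α j)
    (Φ : ℝ) (hΦ : 0 < Φ)
    (hdom : ∀ p ∈ Finset.Icc 1 ptil,
      (∑ j ∈ Finset.Icc 1 p, N j) ≤ Φ * ∑ j ∈ Finset.Icc 1 ptil, α (Nat.dist p j) * N j) :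
    ∑ j ∈ Finset.Icc 1 ptil, α (Nat.dist 1 j) * N j ≤
      (1 + 1 / (Φ * abar + χ)) ^ (-((ptil : ℤ) - 1)) * abar *
        ∑ j ∈ Finset.Icc 1 ptil, N j := by
  have hbefore (p : ℕ) : ∑ j ∈ Finset.Icc 1 ptil with j < p, N j ≤ ∑ j ∈ Finset.Icc 1 p, N j :=
    Finset.sum_le_sum_of_subset_of_nonneg
      (fun j hj => by simp only [Finset.mem_filter, Finset.mem_Icc] at hj ⊢; omega)
      fun j _ _ => hN j
  exact stmt_9_general hptil (fun j _ => hN j) (fun j => (hα j).le) (hα 0) hsum habar hχα hΦ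
    fun p hp => (hbefore p).trans (hdom p (Finset.Ioc_subset_Icc_self hp))
end

section
/- In the setting of the shell-summation lemmas, for every p ∈ {1,…,p̃}: ∑_{p'=1}^{p−1} Ñ_{p'} ≤ ᾱ·N_{1:p} + χ·Ñ_p. -/
/-!
Exchange the two sums and compare the coefficients of each `N j`. If `j < p`, the coefficient on the
left is part of the two-sided sum `∑_{z ∈ ℤ} α |z| = abar`. If `j ≥ p`, the distances from `j` to
`p - 1, p - 2, …` are consecutive integers starting at `j - p + 1`, so the coefficient is part of a
tail of `∑ α`, which is at most `χ * α (j - p)`, the contribution of `j` to `χ * Ñ_p`.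
-/

open Finset

lemma hasSum_natAbs_s11 {M : Type*} [AddCommGroup M] [TopologicalSpace M] [IsTopologicalAddGroup M]
    [T2Space M] {α : ℕ → M} (hsum : Summable α) :
    HasSum (fun z : ℤ ↦ α z.natAbs) (α 0 + 2 • ∑' n, α (n + 1)) := by
  have hnonneg : HasSum (fun n : ℕ ↦ α (n : ℤ).natAbs) (α 0 + ∑' n, α (n + 1)) := by
    simpa only [Int.natAbs_natCast, ← hsum.tsum_eq_zero_add] using hsum.hasSum
  have hneg : HasSum (fun n : ℕ ↦ α (-((n : ℤ) + 1)).natAbs) (∑' n, α (n + 1)) := by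
    simpa only [Int.natAbs_neg, ← Nat.cast_succ, Int.natAbs_natCast] using
      ((summable_nat_add_iff 1).2 hsum).hasSum
  rw [two_nsmul, ← add_assoc]
  exact HasSum.of_nat_of_neg_add_one (f := fun z : ℤ ↦ α z.natAbs) hnonneg hneg

section DistSums

variable {α : ℕ → ℝ}

lemma sum_dist_le (hα : ∀ n, 0 ≤ α n) (hsum : Summable α) (s : Finset ℕ) (j : ℕ) :
    ∑ i ∈ s, α (Nat.dist i j) ≤ α 0 + 2 * ∑' n, α (n + 1) := by
  have hinj : Function.Injective fun i : ℕ ↦ (i : ℤ) - j := fun a b h ↦ by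
    simpa only [sub_left_inj, Nat.cast_inj] using h
  calc ∑ i ∈ s, α (Nat.dist i j)
      = ∑ z ∈ s.map ⟨_, hinj⟩, α z.natAbs := by
        rw [sum_map]
        refine sum_congr rfl fun i _ ↦ congrArg α ?_
        simp only [Nat.dist, Function.Embedding.coeFn_mk]
        omega
    _ ≤ α 0 + 2 * ∑' n, α (n + 1) := by
        simpa only [nsmul_eq_mul, Nat.cast_ofNat] using
          sum_le_hasSum _ (fun z _ ↦ hα z.natAbs) (hasSum_natAbs_s11 hsum)

lemma sum_range_dist_le_tsum (hα : ∀ n, 0 ≤ α n) (hsum : Summable α) {p j : ℕ} (hpj : p ≤ j) :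
    ∑ i ∈ range p, α (Nat.dist i j) ≤ ∑' n, α (n + 1 + (j - p)) := by
  have htail : Summable fun n ↦ α (n + 1 + (j - p)) := by
    simpa only [add_assoc] using (summable_nat_add_iff (1 + (j - p))).2 hsum
  calc ∑ i ∈ range p, α (Nat.dist i j)
      = ∑ n ∈ range p, α (n + 1 + (j - p)) := by
        rw [← sum_range_reflect]
        refine sum_congr rfl fun n hn ↦ congrArg α ?_
        rw [mem_range] at hn
        rw [Nat.dist_eq_sub_of_le (by omega)]
        omega
    _ ≤ ∑' n, α (n + 1 + (j - p)) := htail.sum_le_tsum _ fun n _ ↦ hα _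

lemma sum_range_sum_dist_mul_le (hα : ∀ n, 0 ≤ α n) (hsum : Summable α) {χ : ℝ} (hχ : 0 ≤ χ)
    (htail : ∀ j, ∑' n, α (n + 1 + j) ≤ χ * α j) {N : ℕ → ℝ} {s : Finset ℕ}
    (hN : ∀ j ∈ s, 0 ≤ N j) (p : ℕ) :
    ∑ i ∈ range p, ∑ j ∈ s, α (Nat.dist i j) * N j ≤
      (α 0 + 2 * ∑' n, α (n + 1)) * ∑ j ∈ s with j < p, N j +
        χ * ∑ j ∈ s, α (Nat.dist p j) * N j := by
  rw [sum_comm, sum_filter, mul_sum, mul_sum, ← sum_add_distrib]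
  refine sum_le_sum fun j hj ↦ ?_
  rw [← sum_mul]
  split_ifs with hjp
  · have hnear := mul_le_mul_of_nonneg_right (sum_dist_le hα hsum (range p) j) (hN j hj)
    have hrest : 0 ≤ χ * (α (Nat.dist p j) * N j) := mul_nonneg hχ (mul_nonneg (hα _) (hN j hj))
    linarith
  · have hpj : p ≤ j := not_lt.1 hjp
    have hfar : ∑ i ∈ range p, α (Nat.dist i j) ≤ χ * α (Nat.dist p j) := by
      rw [Nat.dist_eq_sub_of_le hpj]
      exact (sum_range_dist_le_tsum hα hsum hpj).trans (htail _)
    linarith [mul_le_mul_of_nonneg_right hfar (hN j hj)]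

end DistSums

/-- key inequality inside the proofs of Lemmas 9 and 10 of the
paper.  In the shell-summation setting (see Statement 7), for every
`p ∈ {1,…,ptil}`:  `∑_{p'=1}^{p-1} Ñ_{p'} ≤ abar N_{1:p} + χ Ñ_p`. -/
theorem stmt_11 (ptil : ℕ) (hptil : 1 ≤ ptil) (N : ℕ → ℝ) (hN : ∀ j, 0 ≤ N j)
    (α : ℕ → ℝ) (hα : ∀ j, 0 < α j) (hsum : Summable α)
    (abar χ : ℝ) (habar : abar = α 0 + 2 * ∑' j : ℕ, α (j + 1))
    (hχ : 0 ≤ χ) (hχα : ∀ j : ℕ, ∑' q : ℕ, α (q + 1 + j) ≤ χ * α j) :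
    ∀ p ∈ Finset.Icc 1 ptil,
      (∑ p' ∈ Finset.Icc 1 (p - 1), ∑ j ∈ Finset.Icc 1 ptil, α (Nat.dist p' j) * N j) ≤
        abar * (∑ j ∈ Finset.Icc 1 p, N j) +
          χ * ∑ j ∈ Finset.Icc 1 ptil, α (Nat.dist p j) * N j := by
  intro p _
  have hα₀ (j : ℕ) : 0 ≤ α j := (hα j).le
  have habar₀ : 0 ≤ abar :=
    habar ▸ add_nonneg (hα₀ 0) (mul_nonneg zero_le_two (tsum_nonneg fun j ↦ hα₀ (j + 1)))
  have hrange : Icc 1 (p - 1) ⊆ range p := fun i hi ↦ by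
    rw [mem_Icc] at hi
    rw [mem_range]
    omega
  have hfilter : {j ∈ Icc 1 ptil | j < p} ⊆ Icc 1 p := fun j hj ↦ by
    rw [mem_filter, mem_Icc] at hj
    exact mem_Icc.2 ⟨hj.1.1, hj.2.le⟩
  calc ∑ p' ∈ Icc 1 (p - 1), ∑ j ∈ Icc 1 ptil, α (Nat.dist p' j) * N j
      ≤ ∑ p' ∈ range p, ∑ j ∈ Icc 1 ptil, α (Nat.dist p' j) * N j :=
        sum_le_sum_of_subset_of_nonneg hrange fun _ _ _ ↦
          sum_nonneg fun j _ ↦ mul_nonneg (hα₀ _) (hN j)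
    _ ≤ abar * ∑ j ∈ Icc 1 ptil with j < p, N j +
          χ * ∑ j ∈ Icc 1 ptil, α (Nat.dist p j) * N j :=
        habar ▸ sum_range_sum_dist_mul_le hα₀ hsum hχ hχα (fun j _ ↦ hN j) p
    _ ≤ abar * ∑ j ∈ Icc 1 p, N j + χ * ∑ j ∈ Icc 1 ptil, α (Nat.dist p j) * N j :=
        add_le_add (mul_le_mul_of_nonneg_left
          (sum_le_sum_of_subset_of_nonneg hfilter fun j _ _ ↦ hN j) habar₀) le_rfl
end
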